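/- For E14 with H = ∂ₓ² + ∂_y² + b/z̄², X = ∂ₓ − i∂_y, L₁ = (i/2){M,X} + b/z̄, L₂ = M² + b z/z̄, where z = x+iy, z̄ = x−iy, M = x∂_y − y∂ₓ, the structure equations hold: [L₁,L₂] = −{X, L₂} − (1/2)X, [X,L₁] = −X², [X,L₂] = 2L₁. -/

import Mathlib

noncomputable section

open Complex

/-- Partial derivative in `x`. -/
def dx (f : ℝ × ℝ → ℂ) : ℝ × ℝ → ℂ := fun p => fderiv ℝ f p (1, 0)

/-- Partial derivative in `y`. -/
def dy (f : ℝ × ℝ → ℂ) : ℝ × ℝ → ℂ := fun p => fderiv ℝ f p (0, 1)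

/-- `z̄ = x − iy`. -/
def zbar (p : ℝ × ℝ) : ℂ := (p.1 : ℂ) - I * (p.2 : ℂ)

/-- `z = x + iy`. -/
def zc (p : ℝ × ℝ) : ℂ := (p.1 : ℂ) + I * (p.2 : ℂ)

/-- `M = x∂_y − y∂ₓ`. -/
def Mop (f : ℝ × ℝ → ℂ) : ℝ × ℝ → ℂ :=
  fun p => (p.1 : ℂ) * dy f p - (p.2 : ℂ) * dx f p

/-- `X = ∂ₓ − i∂_y`. -/
def Xop (f : ℝ × ℝ → ℂ) : ℝ × ℝ → ℂ := fun p => dx f p - I * dy f p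

/-- `H = ∂ₓ² + ∂_y² + b/z̄²`. -/
def Hop (b : ℂ) (f : ℝ × ℝ → ℂ) : ℝ × ℝ → ℂ :=
  fun p => dx (dx f) p + dy (dy f) p + b / (zbar p) ^ 2 * f p

/-- `L₁ = (i/2){M, X} + b/z̄`. -/
def L1 (b : ℂ) (f : ℝ × ℝ → ℂ) : ℝ × ℝ → ℂ :=
  fun p => (I / 2) * (Mop (Xop f) p + Xop (Mop f) p) + b / zbar p * f p

/-- `L₂ = M² + b z/z̄`. -/
def L2 (b : ℂ) (f : ℝ × ℝ → ℂ) : ℝ × ℝ → ℂ :=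
  fun p => Mop (Mop f) p + b * zc p / zbar p * f p

/-- The domain. -/
def UU : Set (ℝ × ℝ) := {p | zbar p ≠ 0}

theorem UU_open : IsOpen UU := by
  have : Continuous zbar := by unfold zbar; fun_prop
  exact isOpen_ne_fun this continuous_const

/-- Functions smooth on the domain. -/
def VV : Submodule ℂ (ℝ × ℝ → ℂ) where
  carrier := {f | ContDiffOn ℝ (⊤ : ℕ∞) f UU}
  add_mem' := fun ha hb => ContDiffOn.add ha hb
  zero_mem' := contDiffOn_const
  smul_mem' := fun c _ hf => ContDiffOn.const_smul c hf

theorem fd_smooth {f : ℝ × ℝ → ℂ} (hf : ContDiffOn ℝ (⊤ : ℕ∞) f UU) (v : ℝ × ℝ) :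
    ContDiffOn ℝ (⊤ : ℕ∞) (fun p => fderiv ℝ f p v) UU :=
  (hf.fderiv_of_isOpen UU_open (by simp)).clm_apply contDiffOn_const

theorem sm_diff {f : ℝ × ℝ → ℂ} (hf : ContDiffOn ℝ (⊤ : ℕ∞) f UU) {p : ℝ × ℝ} (hp : p ∈ UU) :
    DifferentiableAt ℝ f p :=
  (hf.contDiffAt (UU_open.mem_nhds hp)).differentiableAt (by simp)

theorem fd_congr {f g : ℝ × ℝ → ℂ} (h : Set.EqOn f g UU) {p : ℝ × ℝ} (hp : p ∈ UU) :
    fderiv ℝ f p = fderiv ℝ g p :=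
  Filter.EventuallyEq.fderiv_eq (Filter.eventuallyEq_of_mem (UU_open.mem_nhds hp) h)

/-- General first order operator. -/
def Gop (a c : ℝ × ℝ → ℂ) (f : ℝ × ℝ → ℂ) : ℝ × ℝ → ℂ :=
  fun p => a p * dx f p + c p * dy f p

theorem Gop_congr {a c f g : ℝ × ℝ → ℂ} (h : Set.EqOn f g UU) : 
    Set.EqOn (Gop a c f) (Gop a c g) UU := by
  intro p hp
  simp only [Gop, dx, dy, fd_congr h hp]

/-- Truncated first order operator, as a linear map. -/
def GopL (a c : ℝ × ℝ → ℂ) (ha : ContDiff ℝ (⊤ : ℕ∞) a) (hc : ContDiff ℝ (⊤ : ℕ∞) c) :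
    VV →ₗ[ℂ] VV where
  toFun f := ⟨UU.indicator (Gop a c f.1), by
    have h : ContDiffOn ℝ (⊤ : ℕ∞) (Gop a c f.1) UU :=
      (ha.contDiffOn.mul (fd_smooth f.2 _)).add (hc.contDiffOn.mul (fd_smooth f.2 _))
    exact h.congr (fun p hp => Set.indicator_of_mem hp _)⟩
  map_add' f g := by
    ext p
    by_cases hp : p ∈ UU
    · simp [hp, Gop, dx, dy, fderiv_add (sm_diff f.2 hp) (sm_diff g.2 hp)]
      ring
    · simp [hp]
  map_smul' k f := by
    ext p
    by_cases hp : p ∈ UU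
    · simp [hp, Gop, dx, dy, fderiv_const_smul (sm_diff f.2 hp) k]
      ring
    · simp [hp]

/-- Multiplication operator. -/
def mulL (g : ℝ × ℝ → ℂ) (hg : ContDiffOn ℝ (⊤ : ℕ∞) g UU) : VV →ₗ[ℂ] VV where
  toFun f := ⟨fun p => g p * f.1 p, hg.mul f.2⟩
  map_add' f h := by ext p; simp [mul_add]
  map_smul' k f := by ext p; simp; ring

theorem Gop_mul {a c f g : ℝ × ℝ → ℂ} (hf : ContDiffOn ℝ (⊤ : ℕ∞) f UU)
    (hg : ContDiffOn ℝ (⊤ : ℕ∞) g UU) {p : ℝ × ℝ} (hp : p ∈ UU) :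
    Gop a c (fun q => g q * f q) p = g p * Gop a c f p + Gop a c g p * f p := by
  simp only [Gop, dx, dy, fderiv_fun_mul (sm_diff hg hp) (sm_diff hf hp)]
  simp
  ring

theorem fd_comm {f : ℝ × ℝ → ℂ} (hf : ContDiffOn ℝ (⊤ : ℕ∞) f UU) {p : ℝ × ℝ} (hp : p ∈ UU) :
    dx (dy f) p = dy (dx f) p := by
  have h := hf.contDiffAt (UU_open.mem_nhds hp)
  have hs : IsSymmSndFDerivAt ℝ f p := h.isSymmSndFDerivAt (by simp; exact WithTop.coe_le_coe.mpr le_top)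
  have hd : DifferentiableAt ℝ (fderiv ℝ f) p :=
    ((hf.fderiv_of_isOpen UU_open (m := (⊤ : ℕ∞)) (by simp)).contDiffAt
      (UU_open.mem_nhds hp)).differentiableAt (by simp)
  have key : ∀ v w : ℝ × ℝ, fderiv ℝ (fun q => fderiv ℝ f q v) p w
      = fderiv ℝ (fderiv ℝ f) p w v := by
    intro v w
    rw [fderiv_clm_apply hd (differentiableAt_const v)]
    simp
  change fderiv ℝ (fun q => fderiv ℝ f q (0, 1)) p (1, 0)
    = fderiv ℝ (fun q => fderiv ℝ f q (1, 0)) p (0, 1)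
  rw [key, key]
  exact hs _ _

theorem hasF_fst (p : ℝ × ℝ) : HasFDerivAt (fun q : ℝ × ℝ => (q.1 : ℂ))
    (Complex.ofRealCLM.comp (ContinuousLinearMap.fst ℝ ℝ ℝ)) p :=
  (Complex.ofRealCLM.comp (ContinuousLinearMap.fst ℝ ℝ ℝ)).hasFDerivAt

theorem hasF_snd (p : ℝ × ℝ) : HasFDerivAt (fun q : ℝ × ℝ => (q.2 : ℂ))
    (Complex.ofRealCLM.comp (ContinuousLinearMap.snd ℝ ℝ ℝ)) p :=
  (Complex.ofRealCLM.comp (ContinuousLinearMap.snd ℝ ℝ ℝ)).hasFDerivAt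

theorem sm_fst : ContDiff ℝ (⊤ : ℕ∞) (fun q : ℝ × ℝ => (q.1 : ℂ)) :=
  (Complex.ofRealCLM.comp (ContinuousLinearMap.fst ℝ ℝ ℝ)).contDiff

theorem sm_snd : ContDiff ℝ (⊤ : ℕ∞) (fun q : ℝ × ℝ => (q.2 : ℂ)) :=
  (Complex.ofRealCLM.comp (ContinuousLinearMap.snd ℝ ℝ ℝ)).contDiff

theorem hasF_zbar (p : ℝ × ℝ) : HasFDerivAt zbar
    (Complex.ofRealCLM.comp (ContinuousLinearMap.fst ℝ ℝ ℝ)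
      - I • Complex.ofRealCLM.comp (ContinuousLinearMap.snd ℝ ℝ ℝ)) p :=
  (hasF_fst p).sub ((hasF_snd p).const_mul I)

theorem hasF_zc (p : ℝ × ℝ) : HasFDerivAt zc
    (Complex.ofRealCLM.comp (ContinuousLinearMap.fst ℝ ℝ ℝ)
      + I • Complex.ofRealCLM.comp (ContinuousLinearMap.snd ℝ ℝ ℝ)) p :=
  (hasF_fst p).add ((hasF_snd p).const_mul I)

theorem sm_zbar : ContDiff ℝ (⊤ : ℕ∞) zbar := sm_fst.sub (contDiff_const.mul sm_snd)

theorem sm_zc : ContDiff ℝ (⊤ : ℕ∞) zc := sm_fst.add (contDiff_const.mul sm_snd)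

/-- `1 / z̄`. -/
def hh (p : ℝ × ℝ) : ℂ := (zbar p)⁻¹

/-- `z / z̄`. -/
def gg (p : ℝ × ℝ) : ℂ := zc p * (zbar p)⁻¹

theorem sm_hh : ContDiffOn ℝ (⊤ : ℕ∞) hh UU := sm_zbar.contDiffOn.inv (fun _ hp => hp)

theorem sm_gg : ContDiffOn ℝ (⊤ : ℕ∞) gg UU := sm_zc.contDiffOn.mul sm_hh

theorem hasF_hh {p : ℝ × ℝ} (hp : p ∈ UU) : HasFDerivAt hh
    (-((zbar p) ^ 2)⁻¹ • (Complex.ofRealCLM.comp (ContinuousLinearMap.fst ℝ ℝ ℝ)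
      - I • Complex.ofRealCLM.comp (ContinuousLinearMap.snd ℝ ℝ ℝ))) p :=
  (hasDerivAt_inv (𝕜 := ℂ) hp).comp_hasFDerivAt p (hasF_zbar p)

theorem dx_hh {p : ℝ × ℝ} (hp : p ∈ UU) : dx hh p = -((zbar p) ^ 2)⁻¹ := by
  simp [dx, (hasF_hh hp).fderiv]

theorem dy_hh {p : ℝ × ℝ} (hp : p ∈ UU) : dy hh p = I * ((zbar p) ^ 2)⁻¹ := by
  simp [dy, (hasF_hh hp).fderiv]; try ring

theorem dx_gg {p : ℝ × ℝ} (hp : p ∈ UU) :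
    dx gg p = (zbar p)⁻¹ - zc p * ((zbar p) ^ 2)⁻¹ := by
  have h : HasFDerivAt gg _ p := (hasF_zc p).mul (hasF_hh hp)
  simp [dx, h.fderiv, hh]; try ring

theorem dy_gg {p : ℝ × ℝ} (hp : p ∈ UU) :
    dy gg p = I * (zbar p)⁻¹ + I * zc p * ((zbar p) ^ 2)⁻¹ := by
  have h : HasFDerivAt gg _ p := (hasF_zc p).mul (hasF_hh hp)
  simp [dy, h.fderiv, hh]; try ring

/-- The operator `X`. -/
def XL : VV →ₗ[ℂ] VV := GopL (fun _ => 1) (fun _ => -I) contDiff_const contDiff_const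

/-- The operator `M`. -/
def ML : VV →ₗ[ℂ] VV := GopL (fun q => -(q.2 : ℂ)) (fun q => (q.1 : ℂ)) sm_snd.neg sm_fst

/-- Multiplication by `1 / z̄`. -/
def hL : VV →ₗ[ℂ] VV := mulL hh sm_hh

/-- Multiplication by `z / z̄`. -/
def gL : VV →ₗ[ℂ] VV := mulL gg sm_gg

theorem Xop_eq (f : ℝ × ℝ → ℂ) : Xop f = Gop (fun _ => 1) (fun _ => -I) f := by
  funext p; simp only [Xop, Gop]; ring

theorem Mop_eq (f : ℝ × ℝ → ℂ) : Mop f = Gop (fun q => -(q.2 : ℂ)) (fun q => (q.1 : ℂ)) f := by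
  funext p; simp only [Mop, Gop]; ring

theorem XL_on (v : VV) : Set.EqOn (XL v).1 (Xop v.1) UU := by
  intro p hp
  rw [Xop_eq]
  exact Set.indicator_of_mem hp _

theorem ML_on (v : VV) : Set.EqOn (ML v).1 (Mop v.1) UU := by
  intro p hp
  rw [Mop_eq]
  exact Set.indicator_of_mem hp _

theorem XL_off (v : VV) {p : ℝ × ℝ} (hp : p ∉ UU) : (XL v).1 p = 0 :=
  Set.indicator_of_notMem hp _

theorem ML_off (v : VV) {p : ℝ × ℝ} (hp : p ∉ UU) : (ML v).1 p = 0 :=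
  Set.indicator_of_notMem hp _

theorem Xop_congr {f g : ℝ × ℝ → ℂ} (h : Set.EqOn f g UU) : Set.EqOn (Xop f) (Xop g) UU := by
  rw [Xop_eq, Xop_eq]; exact Gop_congr h

theorem Mop_congr {f g : ℝ × ℝ → ℂ} (h : Set.EqOn f g UU) : Set.EqOn (Mop f) (Mop g) UU := by
  rw [Mop_eq, Mop_eq]; exact Gop_congr h

theorem hh_off {p : ℝ × ℝ} (hp : p ∉ UU) : hh p = 0 := by
  have : zbar p = 0 := not_not.mp hp
  simp [hh, this]

theorem gg_off {p : ℝ × ℝ} (hp : p ∉ UU) : gg p = 0 := by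
  have : zbar p = 0 := not_not.mp hp
  simp [gg, this]

theorem Xop_mul {f g : ℝ × ℝ → ℂ} (hf : ContDiffOn ℝ (⊤ : ℕ∞) f UU)
    (hg : ContDiffOn ℝ (⊤ : ℕ∞) g UU) {p : ℝ × ℝ} (hp : p ∈ UU) :
    Xop (fun q => g q * f q) p = g p * Xop f p + Xop g p * f p := by
  simp only [Xop_eq]; exact Gop_mul hf hg hp

theorem Mop_mul {f g : ℝ × ℝ → ℂ} (hf : ContDiffOn ℝ (⊤ : ℕ∞) f UU)
    (hg : ContDiffOn ℝ (⊤ : ℕ∞) g UU) {p : ℝ × ℝ} (hp : p ∈ UU) :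
    Mop (fun q => g q * f q) p = g p * Mop f p + Mop g p * f p := by
  simp only [Mop_eq]; exact Gop_mul hf hg hp

theorem VV_ext {u v : VV} (h : ∀ p ∈ UU, u.1 p = v.1 p) (h' : ∀ p, p ∉ UU → u.1 p = v.1 p) :
    u = v := by
  apply Subtype.ext
  funext p
  by_cases hp : p ∈ UU
  · exact h p hp
  · exact h' p hp

theorem rXh (v : VV) : XL (hL v) = hL (XL v) := by
  apply VV_ext
  · intro p hp
    rw [XL_on _ hp]
    change Xop (fun q => hh q * v.1 q) p = hh p * (XL v).1 p
    rw [Xop_mul v.2 sm_hh hp, XL_on _ hp]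
    have : Xop hh p = 0 := by
      simp only [Xop, dx_hh hp, dy_hh hp]
      linear_combination (-((zbar p) ^ 2)⁻¹) * I_mul_I
    rw [this]; ring
  · intro p hp
    rw [XL_off _ hp]
    change 0 = hh p * (XL v).1 p
    rw [hh_off hp]; ring

theorem rXg (v : VV) : XL (gL v) = gL (XL v) + (2 : ℂ) • hL v := by
  apply VV_ext
  · intro p hp
    rw [XL_on _ hp]
    change Xop (fun q => gg q * v.1 q) p = gg p * (XL v).1 p + 2 * (hh p * v.1 p)
    rw [Xop_mul v.2 sm_gg hp, XL_on _ hp]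
    have : Xop gg p = 2 * hh p := by
      simp only [Xop, dx_gg hp, dy_gg hp, hh]
      linear_combination (-(zbar p)⁻¹ - zc p * ((zbar p) ^ 2)⁻¹) * I_mul_I
    rw [this]; ring
  · intro p hp
    rw [XL_off _ hp]
    change 0 = gg p * (XL v).1 p + 2 * (hh p * v.1 p)
    rw [hh_off hp, gg_off hp]; ring

theorem rMh (v : VV) : ML (hL v) = hL (ML v) + I • hL v := by
  apply VV_ext
  · intro p hp
    rw [ML_on _ hp]
    change Mop (fun q => hh q * v.1 q) p = hh p * (ML v).1 p + I * (hh p * v.1 p)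
    rw [Mop_mul v.2 sm_hh hp, ML_on _ hp]
    have : Mop hh p = I * hh p := by
      simp only [Mop, dx_hh hp, dy_hh hp, hh]
      have h0 : zbar p ≠ 0 := hp
      field_simp
      simp only [zbar]
      linear_combination (p.2 : ℂ) * I_mul_I
    rw [this]; ring
  · intro p hp
    rw [ML_off _ hp]
    change 0 = hh p * (ML v).1 p + I * (hh p * v.1 p)
    rw [hh_off hp]; ring

theorem rMg (v : VV) : ML (gL v) = gL (ML v) + (2 * I) • gL v := by
  apply VV_ext
  · intro p hp
    rw [ML_on _ hp]
    change Mop (fun q => gg q * v.1 q) p = gg p * (ML v).1 p + (2 * I) * (gg p * v.1 p)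
    rw [Mop_mul v.2 sm_gg hp, ML_on _ hp]
    have : Mop gg p = 2 * I * gg p := by
      simp only [Mop, dx_gg hp, dy_gg hp, gg]
      have h0 : zbar p ≠ 0 := hp
      field_simp
      simp only [zbar, zc]
      have h2 := I_mul_I
      grind
    rw [this]; ring
  · intro p hp
    rw [ML_off _ hp]
    change 0 = gg p * (ML v).1 p + (2 * I) * (gg p * v.1 p)
    rw [gg_off hp]; ring

theorem rgh (v : VV) : gL (hL v) = hL (gL v) := by
  apply Subtype.ext
  funext p
  change gg p * (hh p * v.1 p) = hh p * (gg p * v.1 p)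
  ring

theorem rXM (v : VV) : XL (ML v) = ML (XL v) + I • XL v := by
  apply VV_ext
  · intro p hp
    rw [XL_on _ hp]
    change _ = (ML (XL v)).1 p + I * (XL v).1 p
    rw [ML_on _ hp, XL_on _ hp, Xop_congr (ML_on v) hp, Mop_congr (XL_on v) hp]
    have dX := sm_diff (fd_smooth v.2 (1, 0)) hp
    have dY := sm_diff (fd_smooth v.2 (0, 1)) hp
    have e1 : HasFDerivAt (Mop v.1) _ p :=
      ((hasF_fst p).mul dY.hasFDerivAt).sub ((hasF_snd p).mul dX.hasFDerivAt)
    have e2 : HasFDerivAt (Xop v.1) _ p :=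
      dX.hasFDerivAt.sub (dY.hasFDerivAt.const_mul I)
    have c : fderiv ℝ (fun q => fderiv ℝ v.1 q (0, 1)) p (1, 0)
        = fderiv ℝ (fun q => fderiv ℝ v.1 q (1, 0)) p (0, 1) := fd_comm v.2 hp
    simp only [Xop, Mop] at *
    simp only [dx, dy] at *
    rw [e1.fderiv, e2.fderiv]
    simp
    rw [c]
    have h2 := I_mul_I
    grind
  · intro p hp
    rw [XL_off _ hp]
    change 0 = (ML (XL v)).1 p + I * (XL v).1 p
    rw [ML_off _ hp, XL_off _ hp]; ring

/-- `L₁` as a linear map. -/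
def L1L (b : ℂ) (v : VV) : VV := (I / 2) • (ML (XL v) + XL (ML v)) + b • hL v

/-- `L₂` as a linear map. -/
def L2L (b : ℂ) (v : VV) : VV := ML (ML v) + b • gL v

theorem L1_on (b : ℂ) (v : VV) : Set.EqOn (L1L b v).1 (L1 b v.1) UU := by
  intro p hp
  change (I / 2) * ((ML (XL v)).1 p + (XL (ML v)).1 p) + b * (hh p * v.1 p) = _
  rw [ML_on _ hp, XL_on _ hp, Xop_congr (ML_on v) hp, Mop_congr (XL_on v) hp]
  simp only [L1, hh]; ring

theorem L2_on (b : ℂ) (v : VV) : Set.EqOn (L2L b v).1 (L2 b v.1) UU := by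
  intro p hp
  change (ML (ML v)).1 p + b * (gg p * v.1 p) = _
  rw [ML_on _ hp, Mop_congr (ML_on v) hp]
  simp only [L2, gg]; ring

theorem L1_congr (b : ℂ) {f g : ℝ × ℝ → ℂ} (h : Set.EqOn f g UU) :
    Set.EqOn (L1 b f) (L1 b g) UU := by
  intro p hp
  simp only [L1]
  rw [Mop_congr (Xop_congr h) hp, Xop_congr (Mop_congr h) hp, h hp]

theorem L2_congr (b : ℂ) {f g : ℝ × ℝ → ℂ} (h : Set.EqOn f g UU) :
    Set.EqOn (L2 b f) (L2 b g) UU := by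
  intro p hp
  simp only [L2]
  rw [Mop_congr (Mop_congr h) hp, h hp]

theorem abs1 (b : ℂ) (v : VV) : L1L b (L2L b v) - L2L b (L1L b v) =
    -(XL (L2L b v) + L2L b (XL v)) - (1 / 2 : ℂ) • XL v := by
  simp only [L1L, L2L, map_add, map_smul, rXM, rXh, rXg, rMh, rMg, rgh, smul_add, smul_smul]
  have h2 := I_mul_I
  match_scalars <;> grind

theorem abs2 (b : ℂ) (v : VV) : XL (L1L b v) - L1L b (XL v) = -(XL (XL v)) := by
  simp only [L1L, map_add, map_smul, rXM, rXh, rXg, rMh, rMg, rgh, smul_add, smul_smul]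
  have h2 := I_mul_I
  match_scalars <;> grind

theorem abs3 (b : ℂ) (v : VV) : XL (L2L b v) - L2L b (XL v) = (2 : ℂ) • L1L b v := by
  simp only [L1L, L2L, map_add, map_smul, rXM, rXh, rXg, rMh, rMg, rgh, smul_add, smul_smul]
  have h2 := I_mul_I
  match_scalars <;> grind

/-- E14 structure equations, on the domain `z̄ ≠ 0`:
`[L₁,L₂] = −{X, L₂} − (1/2)X`, `[X,L₁] = −X²`, `[X,L₂] = 2L₁`. -/
theorem stmt12 (b : ℂ) (f : ℝ × ℝ → ℂ)
    (hf : ContDiffOn ℝ (⊤ : ℕ∞) f {p : ℝ × ℝ | zbar p ≠ 0}) :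
    (∀ p : ℝ × ℝ, zbar p ≠ 0 →
      L1 b (L2 b f) p - L2 b (L1 b f) p =
        -(Xop (L2 b f) p + L2 b (Xop f) p) - (1 / 2 : ℂ) * Xop f p) ∧
    (∀ p : ℝ × ℝ, zbar p ≠ 0 →
      Xop (L1 b f) p - L1 b (Xop f) p = -(Xop (Xop f) p)) ∧
    (∀ p : ℝ × ℝ, zbar p ≠ 0 →
      Xop (L2 b f) p - L2 b (Xop f) p = 2 * L1 b f p) := by
  obtain ⟨v, rfl⟩ : ∃ v : VV, v.1 = f := ⟨⟨f, hf⟩, rfl⟩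
  refine ⟨fun p hp => ?_, fun p hp => ?_, fun p hp => ?_⟩
  · have h := congrFun (congrArg Subtype.val (abs1 b v)) p
    change (L1L b (L2L b v)).1 p - (L2L b (L1L b v)).1 p =
      -((XL (L2L b v)).1 p + (L2L b (XL v)).1 p) - (1 / 2 : ℂ) * (XL v).1 p at h
    rwa [L1_on b _ hp, L1_congr b (L2_on b v) hp, L2_on b _ hp, L2_congr b (L1_on b v) hp,
      XL_on _ hp, Xop_congr (L2_on b v) hp, L2_on b _ hp, L2_congr b (XL_on v) hp,
      XL_on _ hp] at h
  · have h := congrFun (congrArg Subtype.val (abs2 b v)) p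
    change (XL (L1L b v)).1 p - (L1L b (XL v)).1 p = -(XL (XL v)).1 p at h
    rwa [XL_on _ hp, Xop_congr (L1_on b v) hp, L1_on b _ hp, L1_congr b (XL_on v) hp,
      XL_on _ hp, Xop_congr (XL_on v) hp] at h
  · have h := congrFun (congrArg Subtype.val (abs3 b v)) p
    change (XL (L2L b v)).1 p - (L2L b (XL v)).1 p = 2 * (L1L b v).1 p at h
    rwa [XL_on _ hp, Xop_congr (L2_on b v) hp, L2_on b _ hp, L2_congr b (XL_on v) hp,
      L1_on b _ hp] at h
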